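/- Define on W the composite odd operators E13 := E12 E23 − q^{−1} E23 E12 and E31 := −(E21 E32 − q^{−1} E32 E21). Then the q-Serre relations hold as operator identities on W: E12 E13 − q E13 E12 = 0 and E21 E31 − q E31 E21 = 0; moreover E13 ∘ E13 = 0 and E31 ∘ E31 = 0. -/

import Mathlib

noncomputable section

/-- The `q`-number `[x] = (q^x - q^(-x))/(q - q⁻¹)`. -/
def qn (q : ℝ) (x : ℤ) : ℝ := (q ^ x - q ^ (-x)) / (q - q⁻¹)

/-- The triple `(m12, m22, m32)` attached to the sector `k ∈ {0,1,2,3}`. -/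
def trip (m13 m23 m33 : ℤ) : Fin 4 → ℤ × ℤ × ℤ
  | 0 => (m13, m23, m33)
  | 1 => (m13, m23 - 1, m33 + 1)
  | 2 => (m13 - 1, m23, m33 + 1)
  | 3 => (m13 - 1, m23 - 1, m33 + 2)

def M12 (m13 m23 m33 : ℤ) (k : Fin 4) : ℤ := (trip m13 m23 m33 k).1
def M22 (m13 m23 m33 : ℤ) (k : Fin 4) : ℤ := (trip m13 m23 m33 k).2.1
def M32 (m13 m23 m33 : ℤ) (k : Fin 4) : ℤ := (trip m13 m23 m33 k).2.2

/-- `m11` is in the allowed range `m22 ≤ m11 ≤ m12` of the sector `k`. -/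
def InR (m13 m23 m33 : ℤ) (k : Fin 4) (x : ℤ) : Prop :=
  M22 m13 m23 m33 k ≤ x ∧ x ≤ M12 m13 m23 m33 k

instance (m13 m23 m33 : ℤ) (k : Fin 4) (x : ℤ) : Decidable (InR m13 m23 m33 k x) :=
  instDecidableAnd

/-- The index set of the basis `v(k, m11)` of `W`. -/
abbrev Idx (m13 m23 m33 : ℤ) : Type :=
  {p : Fin 4 × ℤ // InR m13 m23 m33 p.1 p.2}

/-- The module `W = W^q([m13,m23,m33])`, realized as the free complex vector
space on the basis `v(k, m11)`, `k ∈ {0,1,2,3}`, `m22 ≤ m11 ≤ m12`. -/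
abbrev Wsp (m13 m23 m33 : ℤ) : Type := Idx m13 m23 m33 →₀ ℂ

/-- The basis vector `v(k, m11)` (zero if `m11` is out of range). -/
def bv (m13 m23 m33 : ℤ) (k : Fin 4) (x : ℤ) : Wsp m13 m23 m33 :=
  if h : InR m13 m23 m33 k x then Finsupp.single ⟨(k, x), h⟩ 1 else 0

/-- The sector `V_k`, the span of the `v(k, ·)`. -/
def Vk (m13 m23 m33 : ℤ) (k : Fin 4) : Submodule ℂ (Wsp m13 m23 m33) :=
  Submodule.span ℂ (Set.range (bv m13 m23 m33 k))

/-- The Gel'fand--Zetlin realization of the induced `U_q[gl(2/1)]`-module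
`W^q([m13,m23,m33])`: seven linear operators acting on the basis `v(k, m11)`
by the stated formulas (terms with `m11` out of range being `0`). -/
structure GZ (q : ℝ) (m13 m23 m33 : ℤ) where
  E11 : Wsp m13 m23 m33 →ₗ[ℂ] Wsp m13 m23 m33
  E22 : Wsp m13 m23 m33 →ₗ[ℂ] Wsp m13 m23 m33
  E33 : Wsp m13 m23 m33 →ₗ[ℂ] Wsp m13 m23 m33
  E12 : Wsp m13 m23 m33 →ₗ[ℂ] Wsp m13 m23 m33
  E21 : Wsp m13 m23 m33 →ₗ[ℂ] Wsp m13 m23 m33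
  E23 : Wsp m13 m23 m33 →ₗ[ℂ] Wsp m13 m23 m33
  E32 : Wsp m13 m23 m33 →ₗ[ℂ] Wsp m13 m23 m33
  hE11 : ∀ (k : Fin 4) (x : ℤ), InR m13 m23 m33 k x →
    E11 (bv m13 m23 m33 k x) = (x : ℂ) • bv m13 m23 m33 k x
  hE22 : ∀ (k : Fin 4) (x : ℤ), InR m13 m23 m33 k x →
    E22 (bv m13 m23 m33 k x) =
      ((M12 m13 m23 m33 k + M22 m13 m23 m33 k - x : ℤ) : ℂ) • bv m13 m23 m33 k x
  hE33 : ∀ (k : Fin 4) (x : ℤ), InR m13 m23 m33 k x →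
    E33 (bv m13 m23 m33 k x) = ((M32 m13 m23 m33 k : ℤ) : ℂ) • bv m13 m23 m33 k x
  hE12 : ∀ (k : Fin 4) (x : ℤ), InR m13 m23 m33 k x →
    E12 (bv m13 m23 m33 k x) =
      ((Real.sqrt (qn q (M12 m13 m23 m33 k - x) * qn q (x - M22 m13 m23 m33 k + 1)) : ℝ) : ℂ) •
        bv m13 m23 m33 k (x + 1)
  hE21 : ∀ (k : Fin 4) (x : ℤ), InR m13 m23 m33 k x →
    E21 (bv m13 m23 m33 k x) =
      ((Real.sqrt (qn q (M12 m13 m23 m33 k - x + 1) * qn q (x - M22 m13 m23 m33 k)) : ℝ) : ℂ) •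
        bv m13 m23 m33 k (x - 1)
  hE23₀ : ∀ x : ℤ, InR m13 m23 m33 0 x → E23 (bv m13 m23 m33 0 x) = 0
  hE23₁ : ∀ x : ℤ, InR m13 m23 m33 1 x →
    E23 (bv m13 m23 m33 1 x) =
      ((Real.sqrt (qn q (x - m23 + 1) / qn q (m13 - m23 + 1)) * qn q (m23 + m33) : ℝ) : ℂ) •
        bv m13 m23 m33 0 x
  hE23₂ : ∀ x : ℤ, InR m13 m23 m33 2 x →
    E23 (bv m13 m23 m33 2 x) =
      ((Real.sqrt (qn q (m13 - x) / qn q (m13 - m23)) * qn q (m13 + m33 + 1) : ℝ) : ℂ) •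
        bv m13 m23 m33 0 x
  hE23₃ : ∀ x : ℤ, InR m13 m23 m33 3 x →
    E23 (bv m13 m23 m33 3 x) =
      ((q⁻¹ * Real.sqrt (qn q (m13 - x) / qn q (m13 - m23 + 1)) * qn q (m13 + m33 + 1) : ℝ) : ℂ) •
          bv m13 m23 m33 1 x
        - ((q⁻¹ * Real.sqrt (qn q (x - m23 + 1) * qn q (m13 - m23)) *
            (qn q (m23 + m33) / qn q (m13 - m23 + 1)) : ℝ) : ℂ) • bv m13 m23 m33 2 x
  hE32₀ : ∀ x : ℤ, InR m13 m23 m33 0 x →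
    E32 (bv m13 m23 m33 0 x) =
      ((Real.sqrt (qn q (x - m23 + 1) / qn q (m13 - m23 + 1)) : ℝ) : ℂ) • bv m13 m23 m33 1 x
        + ((Real.sqrt (qn q (m13 - x) * qn q (m13 - m23)) / qn q (m13 - m23 + 1) : ℝ) : ℂ) •
            bv m13 m23 m33 2 x
  hE32₁ : ∀ x : ℤ, InR m13 m23 m33 1 x →
    E32 (bv m13 m23 m33 1 x) =
      ((q * Real.sqrt (qn q (m13 - x) / qn q (m13 - m23 + 1)) : ℝ) : ℂ) • bv m13 m23 m33 3 x
  hE32₂ : ∀ x : ℤ, InR m13 m23 m33 2 x →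
    E32 (bv m13 m23 m33 2 x) =
      -(((q * Real.sqrt (qn q (x - m23 + 1) / qn q (m13 - m23)) : ℝ) : ℂ) • bv m13 m23 m33 3 x)
  hE32₃ : ∀ x : ℤ, InR m13 m23 m33 3 x → E32 (bv m13 m23 m33 3 x) = 0

/-- The composite odd operator `E13 := E12 E23 − q⁻¹ E23 E12`. -/
def E13op (q : ℝ) (m13 m23 m33 : ℤ) (R : GZ q m13 m23 m33) :
    Wsp m13 m23 m33 →ₗ[ℂ] Wsp m13 m23 m33 :=
  R.E12 ∘ₗ R.E23 - ((q : ℂ)⁻¹) • (R.E23 ∘ₗ R.E12)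

/-- The composite odd operator `E31 := −(E21 E32 − q⁻¹ E32 E21)`. -/
def E31op (q : ℝ) (m13 m23 m33 : ℤ) (R : GZ q m13 m23 m33) :
    Wsp m13 m23 m33 →ₗ[ℂ] Wsp m13 m23 m33 :=
  -(R.E21 ∘ₗ R.E32 - ((q : ℂ)⁻¹) • (R.E32 ∘ₗ R.E21))

/-!
After rescaling the basis, the module is modelled on `Λ(ℂ²)`: `E23` and `E32` move between the four
strings `v(k, ·)` by multiplication with `t x = √[m13 - x]` or `r x = √[x - m23 + 1]`, the two paths
between the strings `0` and `3` cancelling, and `E12` multiplies by a product of one value of `t`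
and one value of `r`. With the convention `√[n] = 0` for `n ≤ 0` these formulas need no restriction
on `x`. The reflection `x ↦ m13 + m23 - 1 - x` exchanges `r` with `t` and, after swapping the
strings `0` and `3`, turns `(E21, -E32)` into a pair of the same shape as `(E12, E23)`.

For such a pair `(a, e)` the cancellation gives `e² = 0`, and the recurrence
`[n] + [n + 2] = (q + q⁻¹) [n + 1]` gives the cubic relation `a² e + e a² = (q + q⁻¹) a e a`.
In any algebra these two relations imply both that `a e - q⁻¹ e a` squares to zero and that it
`q`-commutes with `a`.
-/

/-! ### The `q`-commutator -/

section QCommutator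

variable {K A : Type*} [Field K] [Ring A] [Algebra K A] {q : K} {a e : A}

/-- The `q`-commutator `a e - q⁻¹ e a`, which builds the composite root vectors `E13` and `E31`
out of the simple ones. -/
def qCommutator (q : K) (a e : A) : A := a * e - q⁻¹ • (e * a)

lemma qCommutator_neg_right (q : K) (a e : A) : qCommutator q a (-e) = -qCommutator q a e := by
  simp only [qCommutator, mul_neg, neg_mul, smul_neg, neg_sub_neg, neg_sub]

lemma mul_qCommutator_sub_smul_eq_zero (hq : q ≠ 0)
    (serre : a * a * e + e * a * a = (q + q⁻¹) • (a * e * a)) :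
    a * qCommutator q a e - q • (qCommutator q a e * a) = 0 := by
  calc a * qCommutator q a e - q • (qCommutator q a e * a)
      = a * a * e + e * a * a - (q + q⁻¹) • (a * e * a) := by
        simp only [qCommutator, mul_sub, sub_mul, smul_mul_assoc, mul_smul_comm, smul_sub,
          smul_smul, mul_inv_cancel₀ hq, ← mul_assoc]
        module
    _ = 0 := sub_eq_zero.2 serre

lemma qCommutator_mul_self_eq_zero (hq : q + q⁻¹ ≠ 0) (he : e * e = 0)
    (serre : a * a * e + e * a * a = (q + q⁻¹) • (a * e * a)) :
    qCommutator q a e * qCommutator q a e = 0 := by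
  have hq0 : q ≠ 0 := by
    rintro rfl
    simp at hq
  have serre_left : e * a * a * e = (q + q⁻¹) • (e * a * e * a) := by
    simpa [mul_add, ← mul_assoc, he] using congrArg (e * ·) serre
  have serre_right : e * a * a * e = (q + q⁻¹) • (a * e * a * e) := by
    simpa [add_mul, mul_assoc, he] using congrArg (· * e) serre
  have eaea_eq_aeae : e * a * e * a = a * e * a * e :=
    smul_right_injective A hq (serre_left.symm.trans serre_right)
  have aeea_eq_zero : a * e * e * a = 0 := by rw [mul_assoc a e e, he, mul_zero, zero_mul]
  simp only [qCommutator, sub_mul, mul_sub, smul_mul_assoc, mul_smul_comm, ← mul_assoc,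
    aeea_eq_zero, eaea_eq_aeae, serre_right]
  match_scalars
  field_simp
  ring

end QCommutator

/-! ### Odd ladders -/

section OddLadder

variable {K V : Type*} [CommRing K] [AddCommGroup V] [Module K V]

/-- The squares of `r` satisfy the three-term recurrence `r x² + r (x + 2)² = κ r (x + 1)²`
wherever `r (x + 1) ≠ 0`. This form is the one that survives the truncation `√[n] = 0` for
`n ≤ 0`. -/
def SqRecurrence (κ : K) (r : ℤ → K) : Prop :=
  ∀ x, r (x + 1) * (r x ^ 2 + r (x + 1 + 1) ^ 2) = κ * r (x + 1) ^ 3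

/-- The common shape of the pairs `(E12, E23)` and `(E21, -E32)`: four strings of vectors `w k`
spanning the module, along which the even operator `a` moves up by one step, and an odd operator
`e` lowering the degree of the strings `0 | 1, 2 | 3`. -/
structure IsOddLadder (r t : ℤ → K) (α β γ δ : K) (w : Fin 4 → ℤ → V) (a e : Module.End K V) :
    Prop where
  span_eq_top : Submodule.span K (Set.range (Function.uncurry w)) = ⊤
  even_zero : ∀ x, a (w 0 x) = (t x * r x) • w 0 (x + 1)
  even_one : ∀ x, a (w 1 x) = (t x * r (x + 1)) • w 1 (x + 1)
  even_two : ∀ x, a (w 2 x) = (t (x + 1) * r x) • w 2 (x + 1)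
  even_three : ∀ x, a (w 3 x) = (t (x + 1) * r (x + 1)) • w 3 (x + 1)
  odd_zero : ∀ x, e (w 0 x) = 0
  odd_one : ∀ x, e (w 1 x) = (α * r x) • w 0 x
  odd_two : ∀ x, e (w 2 x) = (β * t x) • w 0 x
  odd_three : ∀ x, e (w 3 x) = (γ * t x) • w 1 x + (δ * r x) • w 2 x

namespace IsOddLadder

variable {r t : ℤ → K} {α β γ δ : K} {w : Fin 4 → ℤ → V} {a e : Module.End K V}

lemma hom_ext (h : IsOddLadder r t α β γ δ w a e) {f g : Module.End K V}
    (hfg : ∀ k x, f (w k x) = g (w k x)) : f = g :=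
  LinearMap.ext_on_range h.span_eq_top fun p => hfg p.1 p.2

lemma odd_mul_odd (h : IsOddLadder r t α β γ δ w a e) (hαβγδ : α * γ + β * δ = 0) :
    e * e = 0 := by
  refine h.hom_ext fun k x => ?_
  fin_cases k
  · simp [h.odd_zero]
  · simp [h.odd_zero, h.odd_one]
  · simp [h.odd_zero, h.odd_two]
  · calc e (e (w 3 x)) = ((α * γ + β * δ) * (r x * t x)) • w 0 x := by
          simp only [h.odd_one, h.odd_two, h.odd_three, map_add, map_smul]
          module
      _ = 0 := by rw [hαβγδ, zero_mul, zero_smul]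

lemma serre (h : IsOddLadder r t α β γ δ w a e) {κ : K} (hr : SqRecurrence κ r)
    (ht : SqRecurrence κ t) : a * a * e + e * a * a = κ • (a * e * a) := by
  refine h.hom_ext fun k x => ?_
  have hrx := hr x
  have htx := ht x
  fin_cases k <;>
    simp only [Fin.zero_eta, Fin.mk_one, Fin.reduceFinMk, LinearMap.add_apply,
      LinearMap.smul_apply, Module.End.mul_apply, map_add, map_smul, map_zero, smul_zero, add_zero,
      h.even_zero, h.even_one, h.even_two, h.even_three,
      h.odd_zero, h.odd_one, h.odd_two, h.odd_three]
  · match_scalars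
    linear_combination α * t x * t (x + 1) * hrx
  · match_scalars
    linear_combination β * r x * r (x + 1) * htx
  · match_scalars
    · linear_combination γ * r (x + 1) * r (x + 1 + 1) * htx
    · linear_combination δ * t (x + 1) * t (x + 1 + 1) * hrx

end IsOddLadder

end OddLadder

/-! ### `q`-numbers and their square roots -/

section QNumber

variable {q : ℝ}

lemma qn_neg (q : ℝ) (x : ℤ) : qn q (-x) = -qn q x := by
  rw [qn, qn, neg_neg, ← neg_div, neg_sub]

lemma qn_pos (hq : 0 < q) (hq1 : q ≠ 1) {x : ℤ} (hx : 0 < x) : 0 < qn q x := by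
  rcases hq1.lt_or_gt with h | h
  · exact div_pos_of_neg_of_neg
      (sub_neg.2 (zpow_lt_zpow_right_of_lt_one₀ hq h (by omega)))
      (sub_neg.2 (h.trans ((one_lt_inv₀ hq).2 h)))
  · exact div_pos (sub_pos.2 (zpow_lt_zpow_right₀ h (by omega)))
      (sub_pos.2 ((inv_lt_one_of_one_lt₀ h).trans h))

lemma qn_nonneg (hq : 0 < q) {x : ℤ} (hx : 0 ≤ x) : 0 ≤ qn q x := by
  rcases eq_or_ne q 1 with rfl | hq1
  · simp [qn]
  rcases hx.eq_or_lt with rfl | hx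
  · simp [qn]
  · exact (qn_pos hq hq1 hx).le

lemma qn_add_qn_add_two (hq : q ≠ 0) (x : ℤ) :
    qn q x + qn q (x + 1 + 1) = (q + q⁻¹) * qn q (x + 1) := by
  simp only [qn, neg_add, zpow_add₀ hq, zpow_neg, zpow_one]
  rw [← add_div, ← mul_div_assoc]
  congr 1
  field_simp
  ring

/-- The square root `√[n]` of a `q`-number, as a complex scalar; it is `0` for `n ≤ 0`. -/
def qsqrt (q : ℝ) (n : ℤ) : ℂ := (Real.sqrt (qn q n) : ℝ)

lemma qsqrt_of_nonpos (hq : 0 < q) {n : ℤ} (hn : n ≤ 0) : qsqrt q n = 0 := by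
  have : qn q n ≤ 0 := by
    rw [← neg_nonneg, ← qn_neg]
    exact qn_nonneg hq (by omega)
  rw [qsqrt, Real.sqrt_eq_zero_of_nonpos this, Complex.ofReal_zero]

lemma qsqrt_sq (hq : 0 < q) {n : ℤ} (hn : 0 ≤ n) : qsqrt q n ^ 2 = (qn q n : ℝ) := by
  rw [qsqrt, ← Complex.ofReal_pow, Real.sq_sqrt (qn_nonneg hq hn)]

lemma sqRecurrence_qsqrt (hq : 0 < q) : SqRecurrence ((q : ℂ) + (q : ℂ)⁻¹) (qsqrt q) := by
  intro n
  rcases le_or_gt (n + 1) 0 with hn | hn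
  · simp [qsqrt_of_nonpos hq hn]
  · have recurrence : qsqrt q n ^ 2 + qsqrt q (n + 1 + 1) ^ 2 =
        ((q : ℂ) + (q : ℂ)⁻¹) * qsqrt q (n + 1) ^ 2 := by
      rw [qsqrt_sq hq (by omega), qsqrt_sq hq (by omega), qsqrt_sq hq (by omega)]
      exact_mod_cast qn_add_qn_add_two hq.ne' n
    rw [recurrence]
    ring

/-- The factor `√[m - x]` of the matrix elements: the root of the distance to the top `m` of a
string. -/
def topRoot (q : ℝ) (m x : ℤ) : ℂ := qsqrt q (m - x)

/-- The factor `√[x - m + 1]` of the matrix elements: the root of one plus the distance to the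
bottom `m` of a string. -/
def botRoot (q : ℝ) (m x : ℤ) : ℂ := qsqrt q (x - m + 1)

lemma topRoot_sub_one (q : ℝ) (m x : ℤ) : topRoot q (m - 1) x = topRoot q m (x + 1) := by
  rw [topRoot, topRoot, sub_sub, add_comm]

lemma botRoot_sub_one (q : ℝ) (m x : ℤ) : botRoot q (m - 1) x = botRoot q m (x + 1) := by
  rw [botRoot, botRoot, sub_sub_eq_add_sub]

lemma topRoot_reflect (q : ℝ) (m n x : ℤ) : topRoot q m (m + n - 1 - x) = botRoot q n x := by
  rw [topRoot, botRoot]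
  ring_nf

lemma botRoot_reflect (q : ℝ) (m n x : ℤ) : botRoot q n (m + n - 1 - x) = topRoot q m x := by
  rw [topRoot, botRoot]
  ring_nf

lemma topRoot_sub_one_reflect (q : ℝ) (m n x : ℤ) :
    topRoot q (m - 1) (m + n - 1 - (x + 1)) = botRoot q n x := by
  rw [topRoot, botRoot]
  ring_nf

lemma botRoot_sub_one_reflect (q : ℝ) (m n x : ℤ) :
    botRoot q (n - 1) (m + n - 1 - (x + 1)) = topRoot q m x := by
  rw [topRoot, botRoot]
  ring_nf

lemma sqRecurrence_botRoot (hq : 0 < q) (m : ℤ) :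
    SqRecurrence ((q : ℂ) + (q : ℂ)⁻¹) (botRoot q m) := by
  intro x
  simpa only [botRoot, sub_add_eq_add_sub] using sqRecurrence_qsqrt hq (x - m + 1)

lemma sqRecurrence_topRoot (hq : 0 < q) (m : ℤ) :
    SqRecurrence ((q : ℂ) + (q : ℂ)⁻¹) (topRoot q m) := by
  intro x
  have := sqRecurrence_botRoot hq 0 (m - 1 - (x + 1 + 1))
  simp only [botRoot] at this
  simp only [topRoot]
  ring_nf at this ⊢
  exact this

end QNumber

/-! ### The basis and its rescaling -/

section Basis

variable {q : ℝ} {m13 m23 m33 : ℤ}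

lemma smul_bv_eq_zero {k : Fin 4} {x : ℤ} {c : ℂ} (h : InR m13 m23 m33 k x → c = 0) :
    c • bv m13 m23 m33 k x = 0 := by
  by_cases hx : InR m13 m23 m33 k x
  · rw [h hx, zero_smul]
  · rw [bv, dif_neg hx, smul_zero]

lemma M22_le (m13 m23 m33 : ℤ) (k : Fin 4) : M22 m13 m23 m33 k ≤ m23 := by
  fin_cases k <;> simp [M22, trip]

lemma sub_one_le_M12 (m13 m23 m33 : ℤ) (k : Fin 4) : m13 - 1 ≤ M12 m13 m23 m33 k := by
  fin_cases k <;> simp [M12, trip]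

/-- The factors that bring the matrix elements of `E23` and `E32` to the form of an odd ladder. -/
def bvScale (q : ℝ) (m13 m23 : ℤ) : Fin 4 → ℝ
  | 0 => 1
  | 1 => 1 / Real.sqrt (qn q (m13 - m23 + 1))
  | 2 => Real.sqrt (qn q (m13 - m23)) / qn q (m13 - m23 + 1)
  | 3 => q / qn q (m13 - m23 + 1)

/-- The rescaled basis vector, again `0` if `x` is out of range. -/
def scaledBv (q : ℝ) (m13 m23 m33 : ℤ) (k : Fin 4) (x : ℤ) : Wsp m13 m23 m33 :=
  (bvScale q m13 m23 k : ℂ) • bv m13 m23 m33 k x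

lemma smul_scaledBv_eq_zero {k : Fin 4} {x : ℤ} {c : ℂ} (h : InR m13 m23 m33 k x → c = 0) :
    c • scaledBv q m13 m23 m33 k x = 0 := by
  rw [scaledBv, smul_comm, smul_bv_eq_zero h, smul_zero]

lemma scaledBv_of_not_inR {k : Fin 4} {x : ℤ} (hx : ¬ InR m13 m23 m33 k x) :
    scaledBv q m13 m23 m33 k x = 0 :=
  smul_bv_eq_zero fun h => absurd h hx

-- A point of string `l` missing from a string `k` with the same top lies below `m23`.
lemma botRoot_smul_scaledBv_eq_zero (hq : 0 < q) {k : Fin 4} (l : Fin 4) {x : ℤ}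
    (hx : ¬ InR m13 m23 m33 k x) (hkl : M12 m13 m23 m33 k = M12 m13 m23 m33 l) :
    botRoot q m23 x • scaledBv q m13 m23 m33 l x = 0 := by
  refine smul_scaledBv_eq_zero fun hl => qsqrt_of_nonpos hq ?_
  have := M22_le m13 m23 m33 k
  simp only [InR] at hx hl
  omega

lemma topRoot_smul_scaledBv_eq_zero (hq : 0 < q) {k : Fin 4} (l : Fin 4) {x : ℤ}
    (hx : ¬ InR m13 m23 m33 k x) (hkl : M22 m13 m23 m33 k = M22 m13 m23 m33 l) :
    topRoot q m13 x • scaledBv q m13 m23 m33 l x = 0 := by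
  refine smul_scaledBv_eq_zero fun hl => qsqrt_of_nonpos hq ?_
  have := sub_one_le_M12 m13 m23 m33 k
  simp only [InR] at hx hl
  omega

lemma qn_sub_pos_of_inR_two (hq : 0 < q) (hq1 : q ≠ 1) {x : ℤ} (hx : InR m13 m23 m33 2 x) :
    0 < qn q (m13 - m23) := by
  have : m23 ≤ x ∧ x ≤ m13 - 1 := hx
  exact qn_pos hq hq1 (by omega)

lemma bvScale_ne_zero (hq : 0 < q) (hq1 : q ≠ 1) (hm : m23 ≤ m13) {k : Fin 4} {x : ℤ}
    (hx : InR m13 m23 m33 k x) : bvScale q m13 m23 k ≠ 0 := by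
  have hN := qn_pos hq hq1 (show 0 < m13 - m23 + 1 by omega)
  fin_cases k
  · exact one_ne_zero
  · exact (one_div_pos.2 (Real.sqrt_pos.2 hN)).ne'
  · exact (div_pos (Real.sqrt_pos.2 (qn_sub_pos_of_inR_two hq hq1 hx)) hN).ne'
  · exact (div_pos hq hN).ne'

lemma span_range_scaledBv (hq : 0 < q) (hq1 : q ≠ 1) (hm : m23 ≤ m13) :
    Submodule.span ℂ (Set.range (Function.uncurry (scaledBv q m13 m23 m33))) = ⊤ := by
  rw [eq_top_iff, ← Finsupp.basisSingleOne.span_eq, Submodule.span_le, Set.range_subset_iff]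
  rintro ⟨⟨k, x⟩, hx⟩
  have hc : (bvScale q m13 m23 k : ℂ) ≠ 0 :=
    Complex.ofReal_ne_zero.2 (bvScale_ne_zero hq hq1 hm hx)
  have hmem := Submodule.smul_mem _ (bvScale q m13 m23 k : ℂ)⁻¹ <| Submodule.subset_span
    (R := ℂ) (Set.mem_range_self (f := Function.uncurry (scaledBv q m13 m23 m33)) (k, x))
  simpa [scaledBv, bv, dif_pos hx, hc] using hmem

end Basis

/-! ### The operators on the rescaled basis -/

namespace GZ

variable {q : ℝ} {m13 m23 m33 : ℤ}

lemma E12_bv (hq : 0 < q) (R : GZ q m13 m23 m33) (k : Fin 4) (x : ℤ) :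
    R.E12 (bv m13 m23 m33 k x) =
      (topRoot q (M12 m13 m23 m33 k) x * botRoot q (M22 m13 m23 m33 k) x) •
        bv m13 m23 m33 k (x + 1) := by
  by_cases hx : InR m13 m23 m33 k x
  · rw [R.hE12 k x hx, Real.sqrt_mul (qn_nonneg hq (sub_nonneg.2 hx.2)), Complex.ofReal_mul]
    rfl
  · rw [bv, dif_neg hx, map_zero, smul_bv_eq_zero]
    intro hx'
    rw [botRoot, qsqrt_of_nonpos hq (by simp only [InR] at hx hx'; omega), mul_zero]

lemma E21_bv (hq : 0 < q) (R : GZ q m13 m23 m33) (k : Fin 4) (x : ℤ) :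
    R.E21 (bv m13 m23 m33 k x) =
      (topRoot q (M12 m13 m23 m33 k) (x - 1) * botRoot q (M22 m13 m23 m33 k) (x - 1)) •
        bv m13 m23 m33 k (x - 1) := by
  by_cases hx : InR m13 m23 m33 k x
  · rw [R.hE21 k x hx, Real.sqrt_mul' _ (qn_nonneg hq (sub_nonneg.2 hx.1)), Complex.ofReal_mul,
      topRoot, botRoot, sub_sub_eq_add_sub, sub_right_comm, sub_add_cancel, add_sub_right_comm]
    rfl
  · rw [bv, dif_neg hx, map_zero, smul_bv_eq_zero]
    intro hx'
    rw [topRoot, qsqrt_of_nonpos hq (by simp only [InR] at hx hx'; omega), zero_mul]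

lemma E12_scaledBv (hq : 0 < q) (R : GZ q m13 m23 m33) (k : Fin 4) (x : ℤ) :
    R.E12 (scaledBv q m13 m23 m33 k x) =
      (topRoot q (M12 m13 m23 m33 k) x * botRoot q (M22 m13 m23 m33 k) x) •
        scaledBv q m13 m23 m33 k (x + 1) := by
  rw [scaledBv, map_smul, R.E12_bv hq, smul_comm, scaledBv]

lemma E21_scaledBv_reflect (hq : 0 < q) (R : GZ q m13 m23 m33) (k : Fin 4) (x : ℤ) :
    R.E21 (scaledBv q m13 m23 m33 k (m13 + m23 - 1 - x)) =
      (topRoot q (M12 m13 m23 m33 k) (m13 + m23 - 1 - (x + 1)) *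
        botRoot q (M22 m13 m23 m33 k) (m13 + m23 - 1 - (x + 1))) •
        scaledBv q m13 m23 m33 k (m13 + m23 - 1 - (x + 1)) := by
  rw [scaledBv, map_smul, R.E21_bv hq, smul_comm, sub_sub _ x 1, scaledBv]

lemma E23_scaledBv_zero (R : GZ q m13 m23 m33) (x : ℤ) :
    R.E23 (scaledBv q m13 m23 m33 0 x) = 0 := by
  by_cases hx : InR m13 m23 m33 0 x
  · rw [scaledBv, map_smul, R.hE23₀ x hx, smul_zero]
  · rw [scaledBv_of_not_inR hx, map_zero]

lemma E32_scaledBv_three (R : GZ q m13 m23 m33) (x : ℤ) :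
    R.E32 (scaledBv q m13 m23 m33 3 x) = 0 := by
  by_cases hx : InR m13 m23 m33 3 x
  · rw [scaledBv, map_smul, R.hE32₃ x hx, smul_zero]
  · rw [scaledBv_of_not_inR hx, map_zero]

lemma E23_scaledBv_one (hq : 0 < q) (hq1 : q ≠ 1) (hm : m23 ≤ m13) (R : GZ q m13 m23 m33)
    (x : ℤ) :
    R.E23 (scaledBv q m13 m23 m33 1 x) =
      ((qn q (m23 + m33) / qn q (m13 - m23 + 1) : ℝ) * botRoot q m23 x) •
        scaledBv q m13 m23 m33 0 x := by
  by_cases hx : InR m13 m23 m33 1 x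
  · have hN : 0 < qn q (m13 - m23 + 1) := qn_pos hq hq1 (by omega)
    have hsq := Real.sq_sqrt hN.le
    rw [scaledBv, map_smul, R.hE23₁ x hx, scaledBv, Real.sqrt_div' _ hN.le]
    match_scalars
    simp only [bvScale, botRoot, qsqrt, mul_one]
    norm_cast
    field_simp
    rw [hsq]
    ring
  · rw [scaledBv_of_not_inR hx, map_zero, mul_smul, botRoot_smul_scaledBv_eq_zero hq 0 hx rfl,
      smul_zero]

lemma E23_scaledBv_two (hq : 0 < q) (hq1 : q ≠ 1) (R : GZ q m13 m23 m33) (x : ℤ) :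
    R.E23 (scaledBv q m13 m23 m33 2 x) =
      ((qn q (m13 + m33 + 1) / qn q (m13 - m23 + 1) : ℝ) * topRoot q m13 x) •
        scaledBv q m13 m23 m33 0 x := by
  by_cases hx : InR m13 m23 m33 2 x
  · have hN₀ := qn_sub_pos_of_inR_two hq hq1 hx
    rw [scaledBv, map_smul, R.hE23₂ x hx, scaledBv, Real.sqrt_div' _ hN₀.le]
    match_scalars
    simp only [bvScale, topRoot, qsqrt, mul_one]
    norm_cast
    field_simp
  · rw [scaledBv_of_not_inR hx, map_zero, mul_smul, topRoot_smul_scaledBv_eq_zero hq 0 hx rfl,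
      smul_zero]

lemma E23_scaledBv_three (hq : 0 < q) (hq1 : q ≠ 1) (R : GZ q m13 m23 m33) (x : ℤ) :
    R.E23 (scaledBv q m13 m23 m33 3 x) =
      ((qn q (m13 + m33 + 1) / qn q (m13 - m23 + 1) : ℝ) * topRoot q m13 x) •
          scaledBv q m13 m23 m33 1 x +
        (-(qn q (m23 + m33) / qn q (m13 - m23 + 1) : ℝ) * botRoot q m23 x) •
          scaledBv q m13 m23 m33 2 x := by
  by_cases hx : InR m13 m23 m33 3 x
  · have hrange : m23 - 1 ≤ x ∧ x ≤ m13 - 1 := hx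
    have hN : 0 < qn q (m13 - m23 + 1) := qn_pos hq hq1 (by omega)
    have hN₀ : 0 ≤ qn q (m13 - m23) := qn_nonneg hq (by omega)
    rw [scaledBv, map_smul, R.hE23₃ x hx, scaledBv, scaledBv, Real.sqrt_div' _ hN.le,
      Real.sqrt_mul' _ hN₀]
    match_scalars <;>
    · simp only [bvScale, topRoot, botRoot, qsqrt]
      norm_cast
      field_simp
  · rw [scaledBv_of_not_inR hx, map_zero, mul_smul, mul_smul,
      topRoot_smul_scaledBv_eq_zero hq 1 hx rfl, botRoot_smul_scaledBv_eq_zero hq 2 hx rfl,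
      smul_zero, smul_zero, add_zero]

lemma E32_scaledBv_zero (hq : 0 < q) (hq1 : q ≠ 1) (R : GZ q m13 m23 m33) (x : ℤ) :
    R.E32 (scaledBv q m13 m23 m33 0 x) =
      botRoot q m23 x • scaledBv q m13 m23 m33 1 x +
        topRoot q m13 x • scaledBv q m13 m23 m33 2 x := by
  by_cases hx : InR m13 m23 m33 0 x
  · have hrange : m23 ≤ x ∧ x ≤ m13 := hx
    have hN : 0 < qn q (m13 - m23 + 1) := qn_pos hq hq1 (by omega)
    have hN₀ : 0 ≤ qn q (m13 - m23) := qn_nonneg hq (by omega)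
    rw [scaledBv, map_smul, R.hE32₀ x hx, scaledBv, scaledBv, Real.sqrt_div' _ hN.le,
      Real.sqrt_mul' _ hN₀]
    match_scalars <;>
    · simp only [bvScale, topRoot, botRoot, qsqrt]
      norm_cast
      field_simp
  · rw [scaledBv_of_not_inR hx, map_zero, botRoot_smul_scaledBv_eq_zero hq 1 hx rfl,
      topRoot_smul_scaledBv_eq_zero hq 2 hx rfl, add_zero]

lemma E32_scaledBv_one (hq : 0 < q) (hq1 : q ≠ 1) (hm : m23 ≤ m13) (R : GZ q m13 m23 m33)
    (x : ℤ) :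
    R.E32 (scaledBv q m13 m23 m33 1 x) = topRoot q m13 x • scaledBv q m13 m23 m33 3 x := by
  by_cases hx : InR m13 m23 m33 1 x
  · have hN : 0 < qn q (m13 - m23 + 1) := qn_pos hq hq1 (by omega)
    have hsq := Real.sq_sqrt hN.le
    rw [scaledBv, map_smul, R.hE32₁ x hx, scaledBv, Real.sqrt_div' _ hN.le]
    match_scalars
    simp only [bvScale, topRoot, qsqrt, mul_one]
    norm_cast
    field_simp
    rw [hsq, mul_comm]
  · rw [scaledBv_of_not_inR hx, map_zero, topRoot_smul_scaledBv_eq_zero hq 3 hx rfl]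

lemma E32_scaledBv_two (hq : 0 < q) (hq1 : q ≠ 1) (R : GZ q m13 m23 m33) (x : ℤ) :
    R.E32 (scaledBv q m13 m23 m33 2 x) = -(botRoot q m23 x • scaledBv q m13 m23 m33 3 x) := by
  by_cases hx : InR m13 m23 m33 2 x
  · have hN₀ := qn_sub_pos_of_inR_two hq hq1 hx
    rw [scaledBv, map_smul, R.hE32₂ x hx, scaledBv, Real.sqrt_div' _ hN₀.le]
    match_scalars
    simp only [bvScale, botRoot, qsqrt, mul_one]
    norm_cast
    field_simp
  · rw [scaledBv_of_not_inR hx, map_zero, botRoot_smul_scaledBv_eq_zero hq 3 hx rfl, neg_zero]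

lemma isOddLadder_raising (hq : 0 < q) (hq1 : q ≠ 1) (hm : m23 ≤ m13) (R : GZ q m13 m23 m33) :
    IsOddLadder (botRoot q m23) (topRoot q m13)
      (qn q (m23 + m33) / qn q (m13 - m23 + 1) : ℝ)
      (qn q (m13 + m33 + 1) / qn q (m13 - m23 + 1) : ℝ)
      (qn q (m13 + m33 + 1) / qn q (m13 - m23 + 1) : ℝ)
      (-(qn q (m23 + m33) / qn q (m13 - m23 + 1) : ℝ))
      (scaledBv q m13 m23 m33) R.E12 R.E23 where
  span_eq_top := span_range_scaledBv hq hq1 hm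
  even_zero := R.E12_scaledBv hq 0
  even_one x := by rw [← botRoot_sub_one]; exact R.E12_scaledBv hq 1 x
  even_two x := by rw [← topRoot_sub_one]; exact R.E12_scaledBv hq 2 x
  even_three x := by rw [← topRoot_sub_one, ← botRoot_sub_one]; exact R.E12_scaledBv hq 3 x
  odd_zero := R.E23_scaledBv_zero
  odd_one := R.E23_scaledBv_one hq hq1 hm
  odd_two := R.E23_scaledBv_two hq hq1
  odd_three := R.E23_scaledBv_three hq hq1

lemma isOddLadder_lowering (hq : 0 < q) (hq1 : q ≠ 1) (hm : m23 ≤ m13) (R : GZ q m13 m23 m33) :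
    IsOddLadder (botRoot q m23) (topRoot q m13) (-1) 1 (-1) (-1)
      (fun k x => scaledBv q m13 m23 m33 (Equiv.swap 0 3 k) (m13 + m23 - 1 - x))
      R.E21 (-R.E32) where
  span_eq_top := by
    let reflection : Fin 4 × ℤ ≃ Fin 4 × ℤ :=
      (Equiv.swap 0 3).prodCongr (Equiv.subLeft (m13 + m23 - 1))
    have hspan := span_range_scaledBv (m33 := m33) hq hq1 hm
    rwa [← reflection.surjective.range_comp] at hspan
  even_zero x := by
    rw [mul_comm, ← topRoot_sub_one_reflect q m13 m23 x, ← botRoot_sub_one_reflect q m13 m23 x]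
    exact R.E21_scaledBv_reflect hq 3 x
  even_one x := by
    rw [mul_comm, ← topRoot_reflect q m13 m23 (x + 1), ← botRoot_sub_one_reflect q m13 m23 x]
    exact R.E21_scaledBv_reflect hq 1 x
  even_two x := by
    rw [mul_comm, ← topRoot_sub_one_reflect q m13 m23 x, ← botRoot_reflect q m13 m23 (x + 1)]
    exact R.E21_scaledBv_reflect hq 2 x
  even_three x := by
    rw [mul_comm, ← topRoot_reflect q m13 m23 (x + 1), ← botRoot_reflect q m13 m23 (x + 1)]
    exact R.E21_scaledBv_reflect hq 0 x
  odd_zero x := by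
    rw [LinearMap.neg_apply, neg_eq_zero]
    exact R.E32_scaledBv_three _
  odd_one x := by
    rw [neg_one_mul, neg_smul, ← topRoot_reflect q m13, LinearMap.neg_apply, neg_inj]
    exact R.E32_scaledBv_one hq hq1 hm _
  odd_two x := by
    rw [one_mul, ← botRoot_reflect q m13 m23, LinearMap.neg_apply, neg_eq_iff_eq_neg]
    exact R.E32_scaledBv_two hq hq1 _
  odd_three x := by
    rw [neg_one_mul, neg_one_mul, neg_smul, neg_smul, ← neg_add, LinearMap.neg_apply, neg_inj,
      ← topRoot_reflect q m13 m23 x, ← botRoot_reflect q m13 m23 x, add_comm]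
    exact R.E32_scaledBv_zero hq hq1 _

lemma E13op_eq_qCommutator (R : GZ q m13 m23 m33) :
    E13op q m13 m23 m33 R =
      qCommutator (A := Module.End ℂ (Wsp m13 m23 m33)) (q : ℂ) R.E12 R.E23 := rfl

lemma E31op_eq_qCommutator (R : GZ q m13 m23 m33) :
    E31op q m13 m23 m33 R =
      qCommutator (A := Module.End ℂ (Wsp m13 m23 m33)) (q : ℂ) R.E21 (-R.E32) :=
  (qCommutator_neg_right (A := Module.End ℂ (Wsp m13 m23 m33)) (q : ℂ) R.E21 R.E32).symm

end GZ

/-- With `E13 := E12 E23 − q⁻¹ E23 E12` and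
`E31 := −(E21 E32 − q⁻¹ E32 E21)`, the q-Serre relations hold as operator
identities on `W`: `E12 E13 − q E13 E12 = 0` and `E21 E31 − q E31 E21 = 0`;
moreover `E13 ∘ E13 = 0` and `E31 ∘ E31 = 0`. -/
theorem stmt_8 (q : ℝ) (hq : 0 < q) (hq1 : q ≠ 1)
    (m13 m23 m33 : ℤ) (hm : m23 ≤ m13) (R : GZ q m13 m23 m33) :
    R.E12 ∘ₗ E13op q m13 m23 m33 R - (q : ℂ) • (E13op q m13 m23 m33 R ∘ₗ R.E12) = 0 ∧
    R.E21 ∘ₗ E31op q m13 m23 m33 R - (q : ℂ) • (E31op q m13 m23 m33 R ∘ₗ R.E21) = 0 ∧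
    E13op q m13 m23 m33 R ∘ₗ E13op q m13 m23 m33 R = 0 ∧
    E31op q m13 m23 m33 R ∘ₗ E31op q m13 m23 m33 R = 0 := by
  have hq0 : (q : ℂ) ≠ 0 := Complex.ofReal_ne_zero.2 hq.ne'
  have hqq : (q : ℂ) + (q : ℂ)⁻¹ ≠ 0 := mod_cast (add_pos hq (inv_pos.2 hq)).ne'
  have hr := sqRecurrence_botRoot hq m23
  have ht := sqRecurrence_topRoot hq m13
  have raising := R.isOddLadder_raising hq hq1 hm
  have lowering := R.isOddLadder_lowering hq hq1 hm
  rw [R.E13op_eq_qCommutator, R.E31op_eq_qCommutator]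
  simp only [← Module.End.mul_eq_comp]
  exact ⟨mul_qCommutator_sub_smul_eq_zero hq0 (raising.serre hr ht),
    mul_qCommutator_sub_smul_eq_zero hq0 (lowering.serre hr ht),
    qCommutator_mul_self_eq_zero hqq (raising.odd_mul_odd (by ring)) (raising.serre hr ht),
    qCommutator_mul_self_eq_zero hqq (lowering.odd_mul_odd (by ring)) (lowering.serre hr ht)⟩
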